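/- arXiv:2412.01951 — 3 statements merged into one kernel-verified Lean document; each statement's English description precedes it below -/
import Mathlib

section
/- Let Y be a finite response set, π_base(·|x) a probability distribution on Y with π_base(y|x) > 0 for all y, and y*(x) its set of maximizers. Suppose the margin condition holds at x with parameter γ ∈ (0,1]: max_{y∈Y} π_base(y|x) ≥ (1+γ)·π_base(y'|x) for all y' ∉ y*(x). Let δ ∈ (0,1) and β > 0 satisfy 1/β ≥ (2/γ)·log(2|Y|/δ), and define π*_β(y|x) := π_base(y|x)^{1+1/β}/Σ_{y'∈Y} π_base(y'|x)^{1+1/β}. Then π*_β(y*(x)|x) ≥ 1 − δ/2. -/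
open Finset
open scoped Classical

/-! Off the maximizers the margin bounds `p y` by `(1 + γ)⁻¹ * max p`, so raising to the power `t`
bounds each tilted weight by `(1 + γ) ^ (-t)` times the total. Summing over at most `|Y|` such
points leaves mass at most `|Y| * (1 + γ) ^ (-t)`, and `γ / 2 ≤ log (1 + γ)` turns the lower bound
on `1 / β` into `2 * |Y| / δ ≤ (1 + γ) ^ t` for `t = 1 + 1 / β`. -/

theorem half_le_log_one_add {x : ℝ} (hx₀ : 0 ≤ x) (hx₂ : x ≤ 2) : x / 2 ≤ Real.log (1 + x) :=
  calc x / 2 ≤ 2 * x / (x + 2) := by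
        rw [div_le_div_iff₀ two_pos (by positivity)]
        nlinarith
    _ ≤ Real.log (1 + x) := Real.le_log_one_add_of_nonneg hx₀

theorem le_one_add_rpow_of_log_le {a x t : ℝ} (hx₀ : 0 < x) (hx₂ : x ≤ 2) (ht : 0 ≤ t)
    (h : 2 / x * Real.log a ≤ t) : a ≤ (1 + x) ^ t := by
  refine Real.le_rpow_of_log_le (by positivity) ?_
  calc Real.log a = 2 / x * Real.log a * (x / 2) := by field_simp
    _ ≤ t * (x / 2) := by gcongr
    _ ≤ t * Real.log (1 + x) := by gcongr; exact half_le_log_one_add hx₀.le hx₂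

theorem le_half_mul_one_add_rpow_of_log_le {n δ x t : ℝ} (hδ : 0 < δ) (hx₀ : 0 < x) (hx₂ : x ≤ 2)
    (ht : 0 ≤ t) (h : 2 / x * Real.log (2 * n / δ) ≤ t) : n ≤ δ / 2 * (1 + x) ^ t := by
  have hgap : 2 * n ≤ (1 + x) ^ t * δ :=
    (div_le_iff₀ hδ).mp (le_one_add_rpow_of_log_le hx₀ hx₂ ht h)
  linarith

theorem rpow_le_rpow_div_rpow_of_mul_le {c x y t : ℝ} (hc : 0 < c) (hx : 0 ≤ x) (ht : 0 ≤ t)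
    (h : c * x ≤ y) : x ^ t ≤ y ^ t / c ^ t := by
  rw [le_div_iff₀' (Real.rpow_pos_of_pos hc t), ← Real.mul_rpow hc.le hx]
  exact Real.rpow_le_rpow (by positivity) h ht

section FiniteWeights

variable {Y : Type*} [Fintype Y]

theorem sum_rpow_pos {w : Y → ℝ} (hw : ∀ y, 0 ≤ w y) (hw' : ∃ y, 0 < w y) (t : ℝ) :
    0 < ∑ y, w y ^ t := by
  obtain ⟨y, hy⟩ := hw'
  exact sum_pos' (fun z _ => Real.rpow_nonneg (hw z) t) ⟨y, mem_univ y, Real.rpow_pos_of_pos hy t⟩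

theorem one_sub_le_sum_div_sum_of_sum_compl_le {K : Type*} [Field K] [LinearOrder K]
    [IsStrictOrderedRing K] [DecidableEq Y] {f : Y → K} {A : Finset Y} {ε : K}
    (hf : 0 < ∑ y, f y) (h : ∑ y ∈ Aᶜ, f y ≤ ε * ∑ y, f y) :
    1 - ε ≤ ∑ y ∈ A, f y / ∑ y', f y' := by
  rw [← sum_div, le_div_iff₀ hf]
  linarith [sum_add_sum_compl A f]

theorem rpow_le_sum_rpow_div_rpow {w : Y → ℝ} (hw : ∀ y, 0 ≤ w y) {c t : ℝ} (hc : 0 < c)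
    (ht : 0 ≤ t) {y z : Y} (h : c * w y ≤ w z) : w y ^ t ≤ (∑ y', w y' ^ t) / c ^ t :=
  calc w y ^ t ≤ w z ^ t / c ^ t := rpow_le_rpow_div_rpow_of_mul_le hc (hw y) ht h
    _ ≤ (∑ y', w y' ^ t) / c ^ t := by
        gcongr
        exact single_le_sum (f := fun y' => w y' ^ t)
          (fun y' _ => Real.rpow_nonneg (hw y') t) (mem_univ z)

theorem one_sub_card_compl_div_rpow_le_tilted_mass [DecidableEq Y] {w : Y → ℝ}
    (hw : ∀ y, 0 ≤ w y) (hw' : ∃ y, 0 < w y) {A : Finset Y} {c t : ℝ} (hc : 0 < c) (ht : 0 ≤ t)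
    (hmargin : ∀ y ∉ A, ∃ z, c * w y ≤ w z) :
    1 - #Aᶜ / c ^ t ≤ ∑ y ∈ A, w y ^ t / ∑ y', w y' ^ t := by
  refine one_sub_le_sum_div_sum_of_sum_compl_le (sum_rpow_pos hw hw' t) ?_
  calc ∑ y ∈ Aᶜ, w y ^ t ≤ #Aᶜ • ((∑ y', w y' ^ t) / c ^ t) := by
        refine sum_le_card_nsmul _ _ _ fun y hy => ?_
        obtain ⟨z, hz⟩ := hmargin y (mem_compl.mp hy)
        exact rpow_le_sum_rpow_div_rpow hw hc ht hz
    _ = #Aᶜ / c ^ t * ∑ y', w y' ^ t := by rw [nsmul_eq_mul, mul_div_left_comm, mul_comm]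

end FiniteWeights

theorem tilted_mass_on_argmax_general
    {Y : Type*} [Fintype Y] [Nonempty Y] {w : Y → ℝ} (hw : ∀ y, 0 ≤ w y) (hw' : ∃ y, 0 < w y)
    {c t ε : ℝ} (hc : 0 < c) (ht : 0 ≤ t)
    (hmargin : ∀ y, ¬ (∀ z, w z ≤ w y) → c * w y ≤ univ.sup' univ_nonempty w)
    (hε : Fintype.card Y ≤ ε * c ^ t) :
    1 - ε ≤ ∑ y ∈ univ.filter (fun y => ∀ z, w z ≤ w y), w y ^ t / ∑ y', w y' ^ t := by
  set A : Finset Y := univ.filter fun y => ∀ z, w z ≤ w y with hA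
  have hgap : ∀ y ∉ A, ∃ z, c * w y ≤ w z := fun y hy => by
    simpa only [le_sup'_iff, mem_univ, true_and] using
      hmargin y (by simpa only [hA, mem_filter, mem_univ, true_and] using hy)
  calc 1 - ε ≤ 1 - #Aᶜ / c ^ t := by
        gcongr
        rw [div_le_iff₀ (Real.rpow_pos_of_pos hc t)]
        exact (Nat.cast_le.mpr (card_le_univ Aᶜ)).trans hε
    _ ≤ _ := one_sub_card_compl_div_rpow_le_tilted_mass hw hw' hc ht hgap

/-- Under the margin condition with parameter `γ ∈ (0,1]`, if `1/β ≥ (2/γ)·log(2|Y|/δ)`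
then the power-tilted distribution `π*_β ∝ p^{1+1/β}` puts mass at least `1 - δ/2` on
the set of maximizers of `p`. -/
theorem tilted_mass_on_argmax
    {Y : Type} [Fintype Y] [Nonempty Y]
    (p : Y → ℝ) (hpos : ∀ y, 0 < p y) (hsum : ∑ y, p y = 1)
    (γ : ℝ) (hγ : γ ∈ Set.Ioc (0 : ℝ) 1)
    (hmargin : ∀ y', ¬ (∀ z, p z ≤ p y') → (1 + γ) * p y' ≤ univ.sup' univ_nonempty p)
    (δ : ℝ) (hδ : δ ∈ Set.Ioo (0 : ℝ) 1)
    (β : ℝ) (hβ : 0 < β)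
    (hββ : (2 / γ) * Real.log (2 * Fintype.card Y / δ) ≤ 1 / β) :
    1 - δ / 2 ≤
      ∑ y ∈ univ.filter (fun y => ∀ z, p z ≤ p y),
        p y ^ (1 + 1 / β) / ∑ y', p y' ^ (1 + 1 / β) := by
  have ht : 0 ≤ 1 + 1 / β := by positivity
  exact tilted_mass_on_argmax_general (fun y => (hpos y).le) ⟨_, hpos (Classical.arbitrary Y)⟩
    (by linarith [hγ.1]) ht hmargin
    (le_half_mul_one_add_rpow_of_log_le hδ.1 hγ.1 (by linarith [hγ.2]) ht (by linarith))
end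

section
/- Let X be a prompt set with probability distribution μ and Y a finite response set, and let π_base be a conditional distribution. Fix γ ∈ [0,1), let Y_γ(x) := {y ∈ Y : π_base(y|x) ≥ (1−γ)·max_{y'} π_base(y'|x)}, and let C_{cov,γ} := E_{x∼μ}[1/π_base(Y_γ(x)|x)], assumed finite. Let δ ∈ (0,1), let N* be a positive integer, let N be a positive integer with N ≥ N*·log(2/δ), and let π^BoN_N(·|x) be the law of the best-of-N response: draw y_1,…,y_N i.i.d. from π_base(·|x) and output an element of argmax_{i∈[N]} π_base(y_i|x) (ties broken by a fixed measurable rule). Then for every model π̂: P_{x∼μ}[π̂(Y_γ(x)|x) ≤ 1−δ] ≤ (12/δ)·E_{x∼μ}[H²(π̂(·|x), π^BoN_N(·|x))] + C_{cov,γ}/N*. -/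
/-!
Fix a prompt `x` with `π̂(Y_γ(x) | x) ≤ 1 - δ`, and let `a = π_base(Y_γ(x) | x)`. If `a ≤ 1/N*`,
then `(1/a)/N* ≥ 1`. If `a ≥ 1/N*`, then best-of-`N` misses `Y_γ(x)` only when all draws do, hence
with probability at most `(1 - a)^N ≤ exp(-N/N*) ≤ δ/2`, while `π̂` misses it with probability at
least `δ`; this forces the squared Hellinger distance `H²` to be at least `(√δ - √(δ/2))² ≥ δ/12`.
In both cases `1 ≤ (12/δ) H² + (1/a)/N*`, and integrating over these prompts gives the bound.
-/

open MeasureTheory Finset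
open scoped ENNReal Classical

section Hellinger

variable {Y : Type*} {p q : Y → ℝ} {δ : ℝ}

lemma sq_sqrt_sum_sub_sqrt_sum_le (t : Finset Y) (hp : ∀ y, 0 ≤ p y) (hq : ∀ y, 0 ≤ q y) :
    (√(∑ y ∈ t, p y) - √(∑ y ∈ t, q y)) ^ 2 ≤ ∑ y ∈ t, (√(p y) - √(q y)) ^ 2 := by
  have cauchy_schwarz := Real.sum_sqrt_mul_sqrt_le t hp hq
  have expand : ∑ y ∈ t, (√(p y) - √(q y)) ^ 2
      = ∑ y ∈ t, p y - 2 * ∑ y ∈ t, √(p y) * √(q y) + ∑ y ∈ t, q y := by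
    simp only [sub_sq, Real.sq_sqrt (hp _), Real.sq_sqrt (hq _), sum_add_distrib,
      sum_sub_distrib, mul_sum, mul_assoc]
  rw [expand, sub_sq, Real.sq_sqrt (sum_nonneg fun y _ => hp y),
    Real.sq_sqrt (sum_nonneg fun y _ => hq y)]
  linarith

lemma div_twelve_le_sq_sqrt_sub_sqrt {a b : ℝ} (hδ : 0 ≤ δ) (ha : δ ≤ a) (hb : b ≤ δ / 2) :
    δ / 12 ≤ (√a - √b) ^ 2 := by
  -- `71/100` is a rational upper bound of `√(1/2)`, close enough that `(29/100)² ≥ 1/12`.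
  have sqrt_half_le : √(δ / 2) ≤ 71 / 100 * √δ := by
    rw [Real.sqrt_le_left (by positivity), mul_pow, Real.sq_sqrt hδ]
    linarith
  have gap : 29 / 100 * √δ ≤ √a - √b := by
    linarith [Real.sqrt_le_sqrt ha, Real.sqrt_le_sqrt hb]
  calc δ / 12 ≤ (29 / 100 * √δ) ^ 2 := by
        rw [mul_pow, Real.sq_sqrt hδ]
        linarith
    _ ≤ (√a - √b) ^ 2 := pow_le_pow_left₀ (by positivity) gap 2

variable [Fintype Y]

/-- The squared Hellinger distance of two mass functions on a finite type, without the factor `1/2`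
of some conventions. -/
noncomputable def sqHellinger (p q : Y → ℝ) : ℝ := ∑ y, (√(p y) - √(q y)) ^ 2

lemma sqHellinger_nonneg (p q : Y → ℝ) : 0 ≤ sqHellinger p q :=
  sum_nonneg fun _ _ => sq_nonneg _

lemma div_twelve_le_sqHellinger (t : Finset Y) (hp : ∀ y, 0 ≤ p y) (hq : ∀ y, 0 ≤ q y)
    (hδ : 0 ≤ δ) (hpt : δ ≤ ∑ y ∈ t, p y) (hqt : ∑ y ∈ t, q y ≤ δ / 2) :
    δ / 12 ≤ sqHellinger p q :=
  calc δ / 12 ≤ (√(∑ y ∈ t, p y) - √(∑ y ∈ t, q y)) ^ 2 :=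
        div_twelve_le_sq_sqrt_sub_sqrt hδ hpt hqt
    _ ≤ ∑ y ∈ t, (√(p y) - √(q y)) ^ 2 := sq_sqrt_sum_sub_sqrt_sum_le t hp hq
    _ ≤ sqHellinger p q := sum_le_univ_sum_of_nonneg fun _ => sq_nonneg _

end Hellinger

lemma one_sub_pow_le_of_neg_log_le {a ε : ℝ} {N : ℕ} (ha : a ≤ 1) (hε : 0 < ε)
    (hN : -Real.log ε ≤ N * a) : (1 - a) ^ N ≤ ε :=
  calc (1 - a) ^ N ≤ Real.exp (-a) ^ N :=
        pow_le_pow_left₀ (sub_nonneg.2 ha) (Real.one_sub_le_exp_neg a) N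
    _ = Real.exp (N * -a) := (Real.exp_nat_mul _ _).symm
    _ ≤ Real.exp (Real.log ε) := Real.exp_le_exp.2 (by linarith)
    _ = ε := Real.exp_log hε

section Selection

variable {Y : Type*} [Fintype Y] {N : ℕ} {p : Y → ℝ}

/-- The mass function of the response that the rule `sel` returns on `N` independent draws from `p`;
best-of-`N` is the case of a rule returning a draw of maximal likelihood. -/
noncomputable def selectionLaw (p : Y → ℝ) (sel : (Fin N → Y) → Y) (y : Y) : ℝ :=
  ∑ f ∈ (univ : Finset (Fin N → Y)).filter (fun f => sel f = y), ∏ i, p (f i)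

lemma selectionLaw_nonneg (hp : ∀ y, 0 ≤ p y) (sel : (Fin N → Y) → Y) (y : Y) :
    0 ≤ selectionLaw p sel y :=
  sum_nonneg fun _ _ => prod_nonneg fun _ _ => hp _

lemma sum_selectionLaw_le_pow (hp : ∀ y, 0 ≤ p y) {t : Finset Y} {sel : (Fin N → Y) → Y}
    (hsel : ∀ f, sel f ∈ t → ∀ i, f i ∈ t) :
    ∑ y ∈ t, selectionLaw p sel y ≤ (∑ y ∈ t, p y) ^ N :=
  calc ∑ y ∈ t, selectionLaw p sel y = ∑ f with sel f ∈ t, ∏ i, p (f i) :=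
        sum_fiberwise_eq_sum_filter _ _ _ _
    _ ≤ ∑ f ∈ Fintype.piFinset fun _ => t, ∏ i, p (f i) :=
        sum_le_sum_of_subset_of_nonneg
          (fun f hf => Fintype.mem_piFinset.2 (hsel f (mem_filter.1 hf).2))
          fun _ _ _ => prod_nonneg fun _ _ => hp _
    _ = (∑ y ∈ t, p y) ^ N := (sum_pow' t p N).symm

lemma sum_compl_selectionLaw_le {δ M : ℝ} {s : Finset Y} {sel : (Fin N → Y) → Y}
    (hp : ∀ y, 0 ≤ p y) (hp_sum : ∑ y, p y = 1) (hsel : ∀ f i, f i ∈ s → sel f ∈ s)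
    (hδ : 0 < δ) (hM : 0 < M) (hN : M * Real.log (2 / δ) ≤ N) (hs : 1 / M ≤ ∑ y ∈ s, p y) :
    ∑ y ∈ sᶜ, selectionLaw p sel y ≤ δ / 2 := by
  have split : ∑ y ∈ s, p y + ∑ y ∈ sᶜ, p y = 1 := by rw [sum_add_sum_compl, hp_sum]
  have compl_nonneg : 0 ≤ ∑ y ∈ sᶜ, p y := sum_nonneg fun y _ => hp y
  have log_le : -Real.log (δ / 2) ≤ N * ∑ y ∈ s, p y :=
    calc -Real.log (δ / 2) = Real.log (2 / δ) := by rw [← Real.log_inv, inv_div]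
      _ ≤ N * (1 / M) := by rwa [mul_one_div, le_div_iff₀' hM]
      _ ≤ N * ∑ y ∈ s, p y := by gcongr
  calc ∑ y ∈ sᶜ, selectionLaw p sel y ≤ (∑ y ∈ sᶜ, p y) ^ N :=
        sum_selectionLaw_le_pow hp fun f hf i =>
          mem_compl.2 fun hi => mem_compl.1 hf (hsel f i hi)
    _ = (1 - ∑ y ∈ s, p y) ^ N := by rw [← split, add_sub_cancel_left]
    _ ≤ δ / 2 := one_sub_pow_le_of_neg_log_le (by linarith) (half_pos hδ) log_le

lemma one_le_sqHellinger_selectionLaw_add {q : Y → ℝ} {δ M : ℝ} {s : Finset Y}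
    {sel : (Fin N → Y) → Y} (hp : ∀ y, 0 ≤ p y) (hp_sum : ∑ y, p y = 1)
    (hq : ∀ y, 0 ≤ q y) (hq_sum : ∑ y, q y = 1) (hsel : ∀ f i, f i ∈ s → sel f ∈ s)
    (hδ : 0 < δ) (hM : 0 < M) (hN : M * Real.log (2 / δ) ≤ N)
    (hps : 0 < ∑ y ∈ s, p y) (hqs : ∑ y ∈ s, q y ≤ 1 - δ) :
    1 ≤ 12 / δ * sqHellinger q (selectionLaw p sel) + 1 / (∑ y ∈ s, p y) / M := by
  have hellinger_nonneg := sqHellinger_nonneg q (selectionLaw p sel)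
  obtain covered | uncovered := le_total (1 / M) (∑ y ∈ s, p y)
  · have q_compl : δ ≤ ∑ y ∈ sᶜ, q y := by linarith [sum_add_sum_compl s q]
    have hellinger_large : δ / 12 ≤ sqHellinger q (selectionLaw p sel) :=
      div_twelve_le_sqHellinger sᶜ hq (selectionLaw_nonneg hp sel) hδ.le q_compl
        (sum_compl_selectionLaw_le hp hp_sum hsel hδ hM hN covered)
    calc 1 = 12 / δ * (δ / 12) := by field_simp
      _ ≤ 12 / δ * sqHellinger q (selectionLaw p sel) := by gcongr
      _ ≤ _ := le_add_of_nonneg_right (by positivity)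
  · have inv_mass_large : 1 ≤ 1 / (∑ y ∈ s, p y) / M :=
      (one_le_div hM).2 ((le_one_div hM hps).2 uncovered)
    exact inv_mass_large.trans (le_add_of_nonneg_left (by positivity))

end Selection

section ApproxMaximizers

variable {Y : Type*} [Fintype Y] [Nonempty Y] {γ : ℝ} {p : Y → ℝ}

/-- The set `Y_γ` of `(1 - γ)`-approximate maximizers of `p`. -/
noncomputable def approxMaximizers (γ : ℝ) (p : Y → ℝ) : Finset Y :=
  univ.filter fun y => (1 - γ) * univ.sup' univ_nonempty p ≤ p y

lemma mem_approxMaximizers {y : Y} :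
    y ∈ approxMaximizers γ p ↔ (1 - γ) * univ.sup' univ_nonempty p ≤ p y :=
  mem_filter_univ y

lemma mem_approxMaximizers_of_le {y z : Y} (hy : y ∈ approxMaximizers γ p) (hyz : p y ≤ p z) :
    z ∈ approxMaximizers γ p :=
  mem_approxMaximizers.2 ((mem_approxMaximizers.1 hy).trans hyz)

lemma approxMaximizers_nonempty (hγ : 0 ≤ γ) (hp : ∀ y, 0 ≤ p y) :
    (approxMaximizers γ p).Nonempty := by
  obtain ⟨y, -, hy⟩ := exists_mem_eq_sup' univ_nonempty p
  refine ⟨y, mem_approxMaximizers.2 ?_⟩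
  rw [hy]
  exact mul_le_of_le_one_left (hp y) (sub_le_self 1 hγ)

lemma measurableSet_mem_approxMaximizers {X : Type*} [MeasurableSpace X] {p : X → Y → ℝ}
    (hp : ∀ y, Measurable fun x => p x y) (γ : ℝ) (y : Y) :
    MeasurableSet {x | y ∈ approxMaximizers γ (p x)} := by
  have sup_eq : univ.sup' univ_nonempty (fun y x => p x y)
      = fun x => univ.sup' univ_nonempty (p x) :=
    funext fun x => Finset.sup'_apply univ_nonempty (fun y x => p x y) x
  have sup_measurable : Measurable fun x => univ.sup' univ_nonempty (p x) :=
    sup_eq ▸ Finset.measurable_sup' univ_nonempty fun y _ => hp y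
  simp only [mem_approxMaximizers]
  exact measurableSet_le (sup_measurable.const_mul _) (hp y)

end ApproxMaximizers

lemma measurable_sum_of_measurableSet_mem {X Y E : Type*} [MeasurableSpace X] [Finite Y]
    [MeasurableSpace E] [AddCommMonoid E] [MeasurableAdd₂ E] {s : X → Finset Y} {g : X → Y → E}
    (hs : ∀ y, MeasurableSet {x | y ∈ s x}) (hg : ∀ y, Measurable fun x => g x y) :
    Measurable fun x => ∑ y ∈ s x, g x y := by
  cases nonempty_fintype Y
  have sum_eq (x : X) : ∑ y ∈ s x, g x y = ∑ y, if y ∈ s x then g x y else 0 := by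
    rw [sum_ite_mem, univ_inter]
  simp only [sum_eq]
  exact Finset.measurable_sum _ fun y _ => Measurable.ite (hs y) (hg y) measurable_const

lemma measure_le_lintegral_add_lintegral {X : Type*} [MeasurableSpace X] (μ : Measure X)
    {S : Set X} {f g : X → ℝ≥0∞} (hS : MeasurableSet S) (hg : Measurable g)
    (h : ∀ x ∈ S, 1 ≤ f x + g x) : μ S ≤ ∫⁻ x, f x ∂μ + ∫⁻ x, g x ∂μ :=
  calc μ S = ∫⁻ _ in S, 1 ∂μ := (setLIntegral_one S).symm
    _ ≤ ∫⁻ x in S, f x + g x ∂μ := setLIntegral_mono' hS h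
    _ ≤ ∫⁻ x, f x + g x ∂μ := setLIntegral_le_lintegral S _
    _ = ∫⁻ x, f x ∂μ + ∫⁻ x, g x ∂μ := lintegral_add_right _ hg

theorem sft_sharpening_bound_general
    {X : Type*} [MeasurableSpace X] (μ : Measure X) {Y : Type*} [Fintype Y]
    {pb : X → Y → ℝ} (hpb : ∀ x y, 0 ≤ pb x y) (hpb_sum : ∀ x, ∑ y, pb x y = 1)
    (hpb_meas : ∀ y, Measurable fun x => pb x y)
    {δ M : ℝ} (hδ : 0 < δ) (hM : 0 < M) {N : ℕ} (hN : M * Real.log (2 / δ) ≤ N)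
    {s : X → Finset Y} (hs_meas : ∀ y, MeasurableSet {x | y ∈ s x})
    (hs_pos : ∀ x, 0 < ∑ y ∈ s x, pb x y)
    {sel : X → (Fin N → Y) → Y} (hsel : ∀ x f i, f i ∈ s x → sel x f ∈ s x)
    {phat : X → Y → ℝ} (hphat : ∀ x y, 0 ≤ phat x y) (hphat_sum : ∀ x, ∑ y, phat x y = 1)
    (hphat_meas : ∀ y, Measurable fun x => phat x y) :
    μ {x | ∑ y ∈ s x, phat x y ≤ 1 - δ}
      ≤ ENNReal.ofReal (12 / δ) *
          (∫⁻ x, ENNReal.ofReal (sqHellinger (phat x) (selectionLaw (pb x) (sel x))) ∂μ)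
        + (∫⁻ x, ENNReal.ofReal (1 / ∑ y ∈ s x, pb x y) ∂μ) / ENNReal.ofReal M := by
  have inv_mass_meas : Measurable fun x => ENNReal.ofReal (1 / ∑ y ∈ s x, pb x y) :=
    ((measurable_sum_of_measurableSet_mem hs_meas hpb_meas).const_div 1).ennreal_ofReal
  have bad_meas : MeasurableSet {x | ∑ y ∈ s x, phat x y ≤ 1 - δ} :=
    measurableSet_le (measurable_sum_of_measurableSet_mem hs_meas hphat_meas) measurable_const
  rw [← lintegral_const_mul' _ _ ENNReal.ofReal_ne_top, div_eq_mul_inv _ (ENNReal.ofReal M),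
    ← lintegral_mul_const _ inv_mass_meas]
  -- `sel x` varies arbitrarily with `x`, so the Hellinger integrand may fail to be measurable.
  refine measure_le_lintegral_add_lintegral μ bad_meas (inv_mass_meas.mul_const _) fun x hx => ?_
  have hellinger_nonneg := sqHellinger_nonneg (phat x) (selectionLaw (pb x) (sel x))
  have mass_pos := hs_pos x
  rw [← div_eq_mul_inv, ← ENNReal.ofReal_div_of_pos hM, ← ENNReal.ofReal_mul (by positivity),
    ← ENNReal.ofReal_add (by positivity) (by positivity), ENNReal.one_le_ofReal]
  exact one_le_sqHellinger_selectionLaw_add (hpb x) (hpb_sum x) (hphat x) (hphat_sum x) (hsel x)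
    hδ hM hN mass_pos hx

/-- Main bound for SFT-sharpening: the probability that a model `π̂` places mass at most
`1-δ` on the `(1-γ)`-approximate argmax set is controlled by `(12/δ)` times its expected
squared Hellinger distance to the best-of-`N` distribution, plus `C_{cov,γ}/N*`. -/
theorem sft_sharpening_bound
    {X : Type} [MeasurableSpace X] (μ : Measure X) [IsProbabilityMeasure μ]
    {Y : Type} [Fintype Y] [Nonempty Y]
    (pb : X → Y → ℝ) (hpos : ∀ x y, 0 < pb x y) (hsum : ∀ x, ∑ y, pb x y = 1)
    (hmeas : ∀ y, Measurable fun x => pb x y)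
    (γ : ℝ) (hγ : γ ∈ Set.Ico (0 : ℝ) 1)
    (δ : ℝ) (hδ : δ ∈ Set.Ioo (0 : ℝ) 1)
    (Nstar N : ℕ) (hNstar : 0 < Nstar) (hN0 : 0 < N)
    (hN : (Nstar : ℝ) * Real.log (2 / δ) ≤ (N : ℝ))
    (Ygam : X → Finset Y)
    (hYgam : ∀ x, Ygam x =
      univ.filter fun y => (1 - γ) * univ.sup' univ_nonempty (pb x) ≤ pb x y)
    (Ccov : ℝ≥0∞)
    (hCcov : Ccov = ∫⁻ x, ENNReal.ofReal (1 / ∑ y ∈ Ygam x, pb x y) ∂μ)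
    (hCfin : Ccov ≠ ⊤)
    (sel : X → (Fin N → Y) → Y)
    (hsel : ∀ x f, (∃ i, sel x f = f i) ∧ ∀ i, pb x (f i) ≤ pb x (sel x f))
    (pbon : X → Y → ℝ)
    (hpbon : ∀ x y, pbon x y =
      ∑ f ∈ (univ : Finset (Fin N → Y)).filter (fun f => sel x f = y), ∏ i, pb x (f i))
    (phat : X → Y → ℝ) (hhpos : ∀ x y, 0 ≤ phat x y) (hhsum : ∀ x, ∑ y, phat x y = 1)
    (hhmeas : ∀ y, Measurable fun x => phat x y) :
    μ {x | ∑ y ∈ Ygam x, phat x y ≤ 1 - δ}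
      ≤ ENNReal.ofReal (12 / δ) *
          (∫⁻ x, ENNReal.ofReal (∑ y, (Real.sqrt (phat x y) - Real.sqrt (pbon x y)) ^ 2) ∂μ)
        + Ccov / (Nstar : ℝ≥0∞) := by
  obtain rfl : Ygam = fun x => approxMaximizers γ (pb x) := funext hYgam
  obtain rfl : pbon = fun x => selectionLaw (pb x) (sel x) := funext₂ hpbon
  rw [hCcov, ← ENNReal.ofReal_natCast]
  exact sft_sharpening_bound_general μ (fun x y => (hpos x y).le) hsum hmeas hδ.1
    (Nat.cast_pos.2 hNstar) hN (measurableSet_mem_approxMaximizers hmeas γ)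
    (fun x => sum_pos (fun y _ => hpos x y) (approxMaximizers_nonempty hγ.1 fun y => (hpos x y).le))
    (fun x f i hi => mem_approxMaximizers_of_le hi ((hsel x f).2 i)) hhpos hhsum hhmeas
end

section
/- Let d ∈ ℕ, c ∈ (0,1], and let Y ⊆ ℝ^d be a finite set of unit vectors such that ⟨y, y'⟩ ≤ 1 − c for all distinct y, y' ∈ Y. Fix y* ∈ Y and define the softmax distribution π on Y by π(y) := exp(⟨y, y*⟩)/Σ_{y'∈Y} exp(⟨y', y*⟩). Then: (i) π(y*) ≥ e^c·π(y) for every y ∈ Y with y ≠ y*, so y* is the unique maximizer of π and π satisfies the margin condition with parameter γ = e^c − 1 > 0; and (ii) 1/π(y*) ≥ e^{−2}·|Y|, i.e., the coverage coefficient of π at its maximizer is at least e^{−2}·|Y|. -/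
open Finset
open scoped RealInnerProductSpace

/-- The softmax weight of `i` for the scores `f` over the finite index set `s`. It is defined for
every `i`, but it is a probability distribution only on a nonempty `s`. -/
noncomputable def softmax {ι : Type*} (s : Finset ι) (f : ι → ℝ) (i : ι) : ℝ :=
  Real.exp (f i) / ∑ j ∈ s, Real.exp (f j)

section Softmax

variable {ι : Type*} {s : Finset ι} {f : ι → ℝ} {i j : ι}

theorem softmax_pos (hs : s.Nonempty) : 0 < softmax s f i :=
  div_pos (Real.exp_pos _) (sum_pos (fun _ _ ↦ Real.exp_pos _) hs)

theorem exp_mul_softmax_le_softmax {a : ℝ} (h : a + f i ≤ f j) :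
    Real.exp a * softmax s f i ≤ softmax s f j := by
  unfold softmax
  rw [← mul_div_assoc, ← Real.exp_add]
  gcongr

theorem one_div_softmax (s : Finset ι) (f : ι → ℝ) (j : ι) :
    1 / softmax s f j = ∑ i ∈ s, Real.exp (f i - f j) := by
  simp only [softmax, one_div_div, sum_div, Real.exp_sub]

theorem exp_neg_mul_card_le_one_div_softmax {b : ℝ} (h : ∀ i ∈ s, f j - b ≤ f i) :
    Real.exp (-b) * #s ≤ 1 / softmax s f j := by
  have hterm : ∀ i ∈ s, Real.exp (-b) ≤ Real.exp (f i - f j) := fun i hi ↦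
    Real.exp_le_exp.mpr (by linarith [h i hi])
  calc Real.exp (-b) * #s = #s • Real.exp (-b) := by rw [nsmul_eq_mul, mul_comm]
    _ ≤ ∑ i ∈ s, Real.exp (f i - f j) := card_nsmul_le_sum s _ _ hterm
    _ = 1 / softmax s f j := (one_div_softmax s f j).symm

end Softmax

theorem neg_one_le_real_inner_of_norm_le_one {E : Type*} [SeminormedAddCommGroup E]
    [InnerProductSpace ℝ E] {x y : E} (hx : ‖x‖ ≤ 1) (hy : ‖y‖ ≤ 1) : -1 ≤ ⟪x, y⟫ :=
  neg_le_of_abs_le <| (abs_real_inner_le_norm x y).trans <| mul_le_one₀ hx (norm_nonneg y) hy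

theorem softmax_packing_margin_and_coverage_general {E : Type*} [SeminormedAddCommGroup E]
    [InnerProductSpace ℝ E] {c : ℝ} (hc : 0 < c) {Y : Finset E} (hball : ∀ y ∈ Y, ‖y‖ ≤ 1)
    {ystar : E} (hystar : ystar ∈ Y) (hunit : ‖ystar‖ = 1)
    (hgap : ∀ y ∈ Y, y ≠ ystar → ⟪y, ystar⟫ ≤ 1 - c) :
    (∀ y ∈ Y, y ≠ ystar →
      Real.exp c * softmax Y (⟪·, ystar⟫) y ≤ softmax Y (⟪·, ystar⟫) ystar)
    ∧ (∀ y ∈ Y, y ≠ ystar → softmax Y (⟪·, ystar⟫) y < softmax Y (⟪·, ystar⟫) ystar)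
    ∧ Real.exp (-2) * (#Y : ℝ) ≤ 1 / softmax Y (⟪·, ystar⟫) ystar := by
  have hself : ⟪ystar, ystar⟫ = 1 := by rw [real_inner_self_eq_norm_sq, hunit, one_pow]
  have hmargin : ∀ y ∈ Y, y ≠ ystar →
      Real.exp c * softmax Y (⟪·, ystar⟫) y ≤ softmax Y (⟪·, ystar⟫) ystar := fun y hy hne ↦
    exp_mul_softmax_le_softmax (by linarith [hgap y hy hne])
  have hspread : ∀ y ∈ Y, ⟪ystar, ystar⟫ - 2 ≤ ⟪y, ystar⟫ := fun y hy ↦ by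
    linarith [neg_one_le_real_inner_of_norm_le_one (hball y hy) hunit.le]
  refine ⟨hmargin, fun y hy hne ↦ ?_, exp_neg_mul_card_le_one_div_softmax hspread⟩
  calc softmax Y (⟪·, ystar⟫) y
    _ < Real.exp c * softmax Y (⟪·, ystar⟫) y :=
      lt_mul_of_one_lt_left (softmax_pos ⟨ystar, hystar⟩) (Real.one_lt_exp_iff.mpr hc)
    _ ≤ softmax Y (⟪·, ystar⟫) ystar := hmargin y hy hne

/-- A softmax model over a packing of unit vectors: (i) `π(y*) ≥ e^c·π(y)` for every
`y ≠ y*` (so `y*` is the unique maximizer and the margin condition holds with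
`γ = e^c - 1 > 0`), while (ii) the coverage coefficient `1/π(y*)` is at least
`e^{-2}·|Y|`. -/
theorem softmax_packing_margin_and_coverage
    {d : ℕ} (c : ℝ) (hc : c ∈ Set.Ioc (0 : ℝ) 1)
    (Y : Finset (EuclideanSpace ℝ (Fin d))) (hYne : Y.Nonempty)
    (hunit : ∀ y ∈ Y, ‖y‖ = 1)
    (hpack : ∀ y ∈ Y, ∀ y' ∈ Y, y ≠ y' → ⟪y, y'⟫ ≤ 1 - c)
    (ystar : EuclideanSpace ℝ (Fin d)) (hystar : ystar ∈ Y)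
    (π : EuclideanSpace ℝ (Fin d) → ℝ)
    (hπ : ∀ y, π y = Real.exp ⟪y, ystar⟫ / ∑ y' ∈ Y, Real.exp ⟪y', ystar⟫) :
    (∀ y ∈ Y, y ≠ ystar → Real.exp c * π y ≤ π ystar)
    ∧ (∀ y ∈ Y, y ≠ ystar → π y < π ystar)
    ∧ Real.exp (-2) * (Y.card : ℝ) ≤ 1 / π ystar := by
  obtain rfl : π = softmax Y (⟪·, ystar⟫) := funext hπ
  exact softmax_packing_margin_and_coverage_general hc.1 (fun y hy ↦ (hunit y hy).le) hystar
    (hunit ystar hystar) fun y hy ↦ hpack y hy ystar hystar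
end
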